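/- Let n ≥ 2 and m ∈ ℕ. The group of holomorphic automorphisms of ℂⁿ acts m-transitively: for any pairwise distinct points x₁, …, x_m ∈ ℂⁿ and any pairwise distinct points y₁, …, y_m ∈ ℂⁿ there exists a holomorphic automorphism F of ℂⁿ with F(x_i) = y_i for every i = 1, …, m. (This is Corollary 2.6 of the paper specialized to X = ℂⁿ.) -/

import Mathlib

/-- A holomorphic automorphism of `ℂⁿ`: a bijective entire map whose inverse is
also entire. -/
def IsHolomorphicAutomorphism {n : ℕ} (g : EuclideanSpace ℂ (Fin n) → EuclideanSpace ℂ (Fin n)) :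
    Prop :=
  Differentiable ℂ g ∧
    ∃ ginv : EuclideanSpace ℂ (Fin n) → EuclideanSpace ℂ (Fin n),
      Differentiable ℂ ginv ∧ Function.LeftInverse ginv g ∧ Function.RightInverse ginv g

namespace IsHolomorphicAutomorphism

variable {n : ℕ}

theorem comp {g f : EuclideanSpace ℂ (Fin n) → EuclideanSpace ℂ (Fin n)}
    (hg : IsHolomorphicAutomorphism g) (hf : IsHolomorphicAutomorphism f) :
    IsHolomorphicAutomorphism (g ∘ f) := by
  obtain ⟨hgd, g', hg'd, hgl, hgr⟩ := hg
  obtain ⟨hfd, f', hf'd, hfl, hfr⟩ := hf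
  exact ⟨hgd.comp hfd, f' ∘ g', hf'd.comp hg'd, hgl.comp hfl, hgr.comp hfr⟩

/-- The shear `z ↦ z + Q (ℓ z)` along the kernel of a linear form `ℓ`. -/
theorem shear (ℓ : StrongDual ℂ (EuclideanSpace ℂ (Fin n)))
    {Q : ℂ → EuclideanSpace ℂ (Fin n)} (hQ : Differentiable ℂ Q) (hℓQ : ∀ t, ℓ (Q t) = 0) :
    IsHolomorphicAutomorphism fun z => z + Q (ℓ z) := by
  have hQℓ : Differentiable ℂ fun z => Q (ℓ z) := hQ.comp ℓ.differentiable
  refine ⟨differentiable_id.add hQℓ, fun z => z - Q (ℓ z), differentiable_id.sub hQℓ, ?_, ?_⟩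
  · intro z
    simp [hℓQ]
  · intro z
    simp [hℓQ]

/-- If a linear form `ℓ` separates the points `x i` and agrees with its values on the points `y i`,
then some shear along `ker ℓ` moves every `x i` to `y i`. -/
theorem exists_of_apply_eq {ι : Type*} [Fintype ι]
    (ℓ : StrongDual ℂ (EuclideanSpace ℂ (Fin n))) {x y : ι → EuclideanSpace ℂ (Fin n)}
    (hx : Function.Injective fun i => ℓ (x i)) (hxy : ∀ i, ℓ (x i) = ℓ (y i)) :
    ∃ F : EuclideanSpace ℂ (Fin n) → EuclideanSpace ℂ (Fin n),
      IsHolomorphicAutomorphism F ∧ ∀ i, F (x i) = y i := by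
  classical
  let L : ι → Polynomial ℂ := Lagrange.basis Finset.univ fun i => ℓ (x i)
  let Q : ℂ → EuclideanSpace ℂ (Fin n) := fun t => ∑ i, (L i).eval t • (y i - x i)
  have hQ : Differentiable ℂ Q :=
    Differentiable.fun_sum fun i _ => (L i).differentiable.smul_const _
  have hℓQ : ∀ t, ℓ (Q t) = 0 := fun t => by simp [Q, map_sum, hxy]
  refine ⟨_, shear ℓ hQ hℓQ, fun i => ?_⟩
  have hval : Q (ℓ (x i)) = y i - x i := by
    have hself : (L i).eval (ℓ (x i)) = 1 :=
      Lagrange.eval_basis_self (v := fun i => ℓ (x i)) hx.injOn (Finset.mem_univ i)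
    have hne : ∀ j, j ≠ i → (L j).eval (ℓ (x i)) = 0 := fun j hj =>
      Lagrange.eval_basis_of_ne (v := fun i => ℓ (x i)) hj (Finset.mem_univ i)
    simp only [Q]
    rw [Finset.sum_eq_single i (fun j _ hj => by rw [hne j hj, zero_smul]) (by simp), hself,
      one_smul]
  simp only [hval, add_sub_cancel]

end IsHolomorphicAutomorphism

/-- Two finite injective families of vectors are separated by a common linear form. -/
theorem exists_strongDual_injective_pair {E ι κ : Type*} [NormedAddCommGroup E] [NormedSpace ℂ E]
    [FiniteDimensional ℂ E] [Finite ι] [Finite κ] {x : ι → E} {y : κ → E}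
    (hx : Function.Injective x) (hy : Function.Injective y) :
    ∃ ℓ : StrongDual ℂ E,
      Function.Injective (fun i => ℓ (x i)) ∧ Function.Injective (fun i => ℓ (y i)) := by
  let d : {p : ι × ι // p.1 ≠ p.2} ⊕ {p : κ × κ // p.1 ≠ p.2} → E :=
    Sum.elim (fun p => x p.1.1 - x p.1.2) (fun p => y p.1.1 - y p.1.2)
  have hd : ∀ p, d p ≠ 0 := by
    rintro (⟨p, hp⟩ | ⟨p, hp⟩)
    · exact sub_ne_zero.mpr (hx.ne hp)
    · exact sub_ne_zero.mpr (hy.ne hp)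
  obtain ⟨f, hf⟩ := Module.exists_dual_forall_apply_ne_zero (K := ℂ) d hd
  refine ⟨LinearMap.toContinuousLinearMap f, fun i j hij => ?_, fun i j hij => ?_⟩
  · by_contra hne
    exact hf (Sum.inl ⟨(i, j), hne⟩) (by simpa [d, sub_eq_zero] using hij)
  · by_contra hne
    exact hf (Sum.inr ⟨(i, j), hne⟩) (by simpa [d, sub_eq_zero] using hij)

/-- **m-transitivity of the holomorphic automorphism group of ℂⁿ, n ≥ 2.**
For any pairwise distinct points `x₁, …, x_m` and pairwise distinct points
`y₁, …, y_m` in `ℂⁿ` there is a holomorphic automorphism `F` of `ℂⁿ` with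
`F xᵢ = yᵢ` for all `i`. -/
theorem automorphisms_act_m_transitively
    (n : ℕ) (hn : 2 ≤ n) (m : ℕ)
    (x y : Fin m → EuclideanSpace ℂ (Fin n))
    (hx : Function.Injective x) (hy : Function.Injective y) :
    ∃ F : EuclideanSpace ℂ (Fin n) → EuclideanSpace ℂ (Fin n),
      IsHolomorphicAutomorphism F ∧ ∀ i, F (x i) = y i := by
  obtain ⟨ℓ, hℓx, hℓy⟩ := exists_strongDual_injective_pair hx hy
  obtain ⟨v, hv, hv0⟩ : ∃ v ∈ LinearMap.ker ℓ.toLinearMap, v ≠ 0 :=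
    Submodule.exists_mem_ne_zero_of_ne_bot
      (LinearMap.ker_ne_bot_of_finrank_lt (by simpa using Nat.lt_of_succ_le hn))
  replace hv : ℓ v = 0 := hv
  obtain ⟨u, hu⟩ := SeparatingDual.exists_eq_one (R := ℂ) hv0
  -- Shearing along `v` prescribes the values of `u`, which then separate the points.
  let lift (z : Fin m → EuclideanSpace ℂ (Fin n)) (i : Fin m) : EuclideanSpace ℂ (Fin n) :=
    z i + ((i : ℕ) - u (z i)) • v
  have hℓ_lift : ∀ z i, ℓ (lift z i) = ℓ (z i) := fun z i => by simp [lift, hv]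
  have hu_lift : ∀ z i, u (lift z i) = (i : ℕ) := fun z i => by simp [lift, hu]
  obtain ⟨F, hF, hFx⟩ := IsHolomorphicAutomorphism.exists_of_apply_eq ℓ hℓx
    (y := lift x) fun i => (hℓ_lift x i).symm
  obtain ⟨G, hG, hGx⟩ := IsHolomorphicAutomorphism.exists_of_apply_eq u (x := lift x)
    (y := lift y) (fun i j hij => by simpa [hu_lift, Fin.val_inj] using hij)
    fun i => by rw [hu_lift, hu_lift]
  obtain ⟨H, hH, hHy⟩ := IsHolomorphicAutomorphism.exists_of_apply_eq ℓ (x := lift y)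
    (y := y) (by simpa only [hℓ_lift] using hℓy) fun i => hℓ_lift y i
  exact ⟨H ∘ G ∘ F, hH.comp (hG.comp hF), fun i => by simp [hFx, hGx, hHy]⟩
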